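/- The q-tangent number satisfies E_{2n+1}(q) = \frac{1}{(1-q)^{2n+1}} \sum_{k=0}^n \left( \binom{2n+1}{n-k} - \binom{2n+1}{n-k-1} \right) \sum_{i=0}^{2k+1} (-1)^{i+k} q^{i(2k+2-i)}, where E_{2n+1}(q) is defined as the sum over weighted Dyck paths of length 2n: each up step from height h carries weight q^a for some 0 \le a \le h, each down step from height h carries weight q^a for some 0 \le a \le h, and the path weight is the product of step weights; E_{2n+1}(q) is the sum of weights over all such weighted paths. -/

import Mathlib

open Finset Polynomial
open scoped Classical

noncomputable section
/-- The value of a step: `+1` for an up step, `-1` for a down step. -/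
def stepVal (b : Bool) : ℤ := if b then 1 else -1

/-- Height of the path after its first `i` steps. -/
def pathHeight {m : ℕ} (s : Fin m → Bool) (i : ℕ) : ℤ :=
  ∑ j : Fin m, if (j : ℕ) < i then stepVal (s j) else 0

/-- A Dyck path: all partial sums nonnegative, final height `0`. -/
def IsDyck {m : ℕ} (s : Fin m → Bool) : Prop :=
  (∀ i : Fin m, 0 ≤ pathHeight s ((i : ℕ) + 1)) ∧ pathHeight s m = 0
/-- The `q`-integer `[k]_q = 1 + q + ⋯ + q^(k-1)` as a polynomial in `ℤ[q]`. -/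
def qNum (k : ℕ) : Polynomial ℤ := ∑ j ∈ Finset.range k, X ^ j

/-- The `q`-tangent polynomial `E_{2n+1}(q)`: sum over Dyck paths of length `2n`,
where every step (up or down) starting at height `h` contributes `[h+1]_q`. -/
def Etan (n : ℕ) : Polynomial ℤ :=
  ∑ s ∈ Finset.univ.filter (fun s : Fin (2*n) → Bool => IsDyck s),
    ∏ i : Fin (2*n), qNum ((pathHeight s (i : ℕ)).toNat + 1)

/-- The `q`-secant polynomial `E_{2n}(q)`: sum over Dyck paths of length `2n`,
where an up step from height `h` contributes `[h+1]_q` and a down step from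
height `h` contributes `[h]_q`. -/
def Esec (n : ℕ) : Polynomial ℤ :=
  ∑ s ∈ Finset.univ.filter (fun s : Fin (2*n) → Bool => IsDyck s),
    ∏ i : Fin (2*n),
      if s i then qNum ((pathHeight s (i : ℕ)).toNat + 1)
      else qNum ((pathHeight s (i : ℕ)).toNat)
/-- Binomial coefficient `a choose b` with integer lower index, equal to `0`
when `b < 0`. -/
def chooseInt (a : ℕ) (b : ℤ) : ℤ := if 0 ≤ b then a.choose b.toNat else 0

section PathSide

/-- Weighted sum over paths with `m` steps that start at height `h`, stay nonnegative and end at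
height `0`; a step from height `j` has weight `[j+1]_q`. -/
def pathSum (m : ℕ) (h : ℤ) : Polynomial ℤ :=
  ∑ s : Fin m → Bool,
    if (∀ i ≤ m, 0 ≤ h + pathHeight s i) ∧ h + pathHeight s m = 0 then
      ∏ i : Fin m, qNum ((h + pathHeight s (i : ℕ)).toNat + 1) else 0

lemma pathHeight_zero {m : ℕ} (s : Fin m → Bool) : pathHeight s 0 = 0 := by
  simp [pathHeight]

lemma pathHeight_cons_succ {m : ℕ} (b : Bool) (s : Fin m → Bool) (i : ℕ) :
    pathHeight (Fin.cons b s : Fin (m + 1) → Bool) (i + 1) = stepVal b + pathHeight s i := by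
  simp [pathHeight, Fin.sum_univ_succ]

lemma Etan_eq_pathSum (n : ℕ) : Etan n = pathSum (2 * n) 0 := by
  rw [Etan, pathSum, Finset.sum_filter]
  refine Finset.sum_congr rfl fun s _ => ?_
  simp only [zero_add]
  have h : IsDyck s ↔ (∀ i ≤ 2 * n, 0 ≤ pathHeight s i) ∧ pathHeight s (2 * n) = 0 := by
    refine and_congr_left fun _ => ⟨fun h i hi => ?_, fun h i => h _ i.isLt⟩
    rcases i with _ | i
    · rw [pathHeight_zero]
    · exact h ⟨i, hi⟩
  simp only [h]

lemma pathSum_zero (h : ℤ) : pathSum 0 h = if h = 0 then 1 else 0 := by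
  simp only [pathSum, Fintype.sum_unique, Nat.le_zero, forall_eq, pathHeight_zero, add_zero,
    Finset.univ_eq_empty, Finset.prod_empty]
  refine if_congr ⟨fun h => h.2, fun h => ⟨h.ge, h⟩⟩ rfl rfl

lemma pathSum_of_neg (m : ℕ) {h : ℤ} (hh : h < 0) : pathSum m h = 0 := by
  refine Finset.sum_eq_zero fun s _ => if_neg fun hs => ?_
  have := hs.1 0 (Nat.zero_le _)
  rw [pathHeight_zero] at this
  lia

lemma pathSum_succ (m : ℕ) {h : ℤ} (hh : 0 ≤ h) :
    pathSum (m + 1) h = qNum (h.toNat + 1) * (pathSum m (h + 1) + pathSum m (h - 1)) := by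
  have key (b : Bool) (s : Fin m → Bool) :
      (if (∀ i ≤ m + 1, 0 ≤ h + pathHeight (Fin.cons b s : Fin (m + 1) → Bool) i) ∧
          h + pathHeight (Fin.cons b s : Fin (m + 1) → Bool) (m + 1) = 0 then
        ∏ i : Fin (m + 1),
          qNum ((h + pathHeight (Fin.cons b s : Fin (m + 1) → Bool) (i : ℕ)).toNat + 1) else 0) =
      qNum (h.toNat + 1) *
        if (∀ i ≤ m, 0 ≤ (h + stepVal b) + pathHeight s i) ∧
            (h + stepVal b) + pathHeight s m = 0 then
          ∏ i : Fin m, qNum (((h + stepVal b) + pathHeight s (i : ℕ)).toNat + 1) else 0 := by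
    rw [mul_ite, mul_zero, Fin.prod_univ_succ]
    simp only [Fin.val_zero, Fin.val_succ, pathHeight_cons_succ, pathHeight_zero, add_zero,
      add_assoc]
    refine if_congr (and_congr_left fun _ => ⟨fun H i hi => ?_, fun H i hi => ?_⟩) rfl rfl
    · simpa only [pathHeight_cons_succ] using H (i + 1) (by lia)
    · rcases i with _ | i
      · simpa only [pathHeight_zero, add_zero] using hh
      · simpa only [pathHeight_cons_succ] using H i (by lia)
  rw [pathSum, ← (Fin.consEquiv fun _ => Bool).sum_comp, Fintype.sum_prod_type, Fintype.sum_bool]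
  refine (congrArg₂ (· + ·) (Finset.sum_congr rfl fun s _ => key true s)
    (Finset.sum_congr rfl fun s _ => key false s)).trans ?_
  rw [← Finset.mul_sum, ← Finset.mul_sum, ← mul_add]
  rfl

lemma one_sub_X_mul_qNum (k : ℕ) : (1 - X) * qNum k = 1 - X ^ k :=
  mul_neg_geom_sum X k

end PathSide

section TransferOperator

variable {K : Type*} [CommRing K]

/-- Two steps of the weighted walk, on functions of half the (even) height. -/
def twoStep (q : K) : (ℕ → K) →ₗ[K] (ℕ → K) where
  toFun g l := (1 - q ^ (2 * l + 1)) *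
    ((1 - q ^ (2 * l + 2)) * (g (l + 1) + g l) + (1 - q ^ (2 * l)) * (g l + g (l - 1)))
  map_add' f g := by ext l; simp only [Pi.add_apply]; ring
  map_smul' c g := by ext l; simp only [Pi.smul_apply, smul_eq_mul, RingHom.id_apply]; ring

lemma one_sub_X_pow_mul_pathSum (n l : ℕ) :
    (1 - X) ^ (2 * (n + 1) + 1) * pathSum (2 * (n + 1)) ((2 * l : ℕ) : ℤ) =
      twoStep X (fun j => (1 - X) ^ (2 * n + 1) * pathSum (2 * n) ((2 * j : ℕ) : ℤ)) l := by
  have hup : pathSum (2 * n + 1) ((2 * l : ℕ) + 1) = qNum (2 * l + 2) *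
      (pathSum (2 * n) ((2 * (l + 1) : ℕ) : ℤ) + pathSum (2 * n) ((2 * l : ℕ) : ℤ)) := by
    rw [pathSum_succ _ (by lia), show (((2 * l : ℕ) : ℤ) + 1).toNat + 1 = 2 * l + 2 by omega,
      show ((2 * l : ℕ) : ℤ) + 1 + 1 = (2 * (l + 1) : ℕ) by lia, add_sub_cancel_right]
  have hdown : (1 - X) * pathSum (2 * n + 1) ((2 * l : ℕ) - 1) = (1 - X ^ (2 * l)) *
      (pathSum (2 * n) ((2 * l : ℕ) : ℤ) + pathSum (2 * n) ((2 * (l - 1) : ℕ) : ℤ)) := by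
    rcases l with _ | l
    · rw [pathSum_of_neg _ (by simp)]
      simp
    · rw [pathSum_succ _ (by lia), ← one_sub_X_mul_qNum, mul_assoc,
        show (((2 * (l + 1) : ℕ) : ℤ) - 1).toNat + 1 = 2 * (l + 1) by omega, sub_add_cancel,
        show ((2 * (l + 1) : ℕ) : ℤ) - 1 - 1 = (2 * (l + 1 - 1) : ℕ) by lia]
  rw [show 2 * (n + 1) = 2 * n + 1 + 1 by ring, pathSum_succ _ (by lia), Int.toNat_natCast, hup]
  simp only [twoStep, LinearMap.coe_mk, AddHom.coe_mk]
  linear_combination (1 - X) ^ (2 * n + 1) * ((1 - X) * qNum (2 * l + 1)) * hdown +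
    (1 - X) ^ (2 * n + 1) * ((1 - X ^ (2 * l)) *
      (pathSum (2 * n) ((2 * l : ℕ) : ℤ) + pathSum (2 * n) ((2 * (l - 1) : ℕ) : ℤ)) +
      (1 - X) * qNum (2 * l + 2) *
      (pathSum (2 * n) ((2 * (l + 1) : ℕ) : ℤ) + pathSum (2 * n) ((2 * l : ℕ) : ℤ))) *
      one_sub_X_mul_qNum (2 * l + 1) +
    (1 - X) ^ (2 * n + 1) * (1 - X ^ (2 * l + 1)) *
      (pathSum (2 * n) ((2 * (l + 1) : ℕ) : ℤ) + pathSum (2 * n) ((2 * l : ℕ) : ℤ)) *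
      one_sub_X_mul_qNum (2 * l + 2)

/-- The Gaussian binomial coefficient with base `p`. -/
def gaussBinom (p : K) : ℕ → ℕ → K
  | _, 0 => 1
  | 0, _ + 1 => 0
  | k + 1, l + 1 => p ^ (l + 1) * gaussBinom p k (l + 1) + gaussBinom p k l

lemma gaussBinom_zero_right (p : K) (k : ℕ) : gaussBinom p k 0 = 1 := by
  cases k <;> rfl

lemma gaussBinom_absorption (p : K) (k : ℕ) :
    (∀ l, (1 - p ^ (l + 1)) * gaussBinom p (k + 1) (l + 1) =
      (1 - p ^ (k + 1)) * gaussBinom p k l) ∧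
    ∀ l, (p ^ l - p ^ (k + 1)) * gaussBinom p (k + 1) l =
      p ^ l * (1 - p ^ (k + 1)) * gaussBinom p k l := by
  have second (k : ℕ) (h : ∀ l, (1 - p ^ (l + 1)) * gaussBinom p (k + 1) (l + 1) =
      (1 - p ^ (k + 1)) * gaussBinom p k l) (l : ℕ) :
      (p ^ l - p ^ (k + 1)) * gaussBinom p (k + 1) l =
        p ^ l * (1 - p ^ (k + 1)) * gaussBinom p k l := by
    rcases l with _ | l
    · simp [gaussBinom_zero_right]
    · have := h l
      simp only [gaussBinom] at this ⊢
      linear_combination -this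
  suffices h : ∀ l, (1 - p ^ (l + 1)) * gaussBinom p (k + 1) (l + 1) =
      (1 - p ^ (k + 1)) * gaussBinom p k l from ⟨h, second k h⟩
  induction k with
  | zero =>
    intro l
    rcases l with _ | l <;> simp [gaussBinom]
  | succ k ih =>
    intro l
    have h1 := ih l
    have h2 := second k ih l
    rw [gaussBinom]
    linear_combination p ^ (l + 1) * h1 - p * h2

/-- The `q`-Pochhammer symbol `(q; q)_k`. -/
def qFact (q : K) (k : ℕ) : K := ∏ i ∈ Finset.range k, (1 - q ^ (i + 1))

lemma qFact_succ (q : K) (k : ℕ) : qFact q (k + 1) = qFact q k * (1 - q ^ (k + 1)) :=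
  Finset.prod_range_succ _ _

/-- The image of `(1 - q) δ₀` under `∏_{i=1}^k ((1 - q^{2i})² + q^{2i} twoStep)`. -/
def pathVec (q : K) (k l : ℕ) : K :=
  qFact q (2 * k + 1) * q ^ (l * (l + 1)) * gaussBinom (q ^ 2) k l

lemma twoStep_pathVec (q : K) (k : ℕ) :
    q ^ (2 * k + 2) • twoStep q (pathVec q k) =
      pathVec q (k + 1) - (1 - q ^ (2 * k + 2)) ^ 2 • pathVec q k := by
  ext l
  simp only [twoStep, LinearMap.coe_mk, AddHom.coe_mk, Pi.smul_apply, Pi.sub_apply, smul_eq_mul,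
    pathVec]
  have hF : qFact q (2 * (k + 1) + 1) =
      qFact q (2 * k + 1) * (1 - q ^ (2 * k + 2)) * (1 - q ^ (2 * k + 3)) := by
    rw [← qFact_succ, ← qFact_succ, Nat.mul_add_one, Nat.add_right_comm]
  rw [hF]
  generalize qFact q (2 * k + 1) = F
  rcases l with _ | l
  · have h := (gaussBinom_absorption (q ^ 2) k).1 0
    simp only [gaussBinom, gaussBinom_zero_right] at h ⊢
    linear_combination (F * q ^ (2 * k + 2) * (1 - q)) * h
  · have h1 := (gaussBinom_absorption (q ^ 2) k).1 l
    have h2 := (gaussBinom_absorption (q ^ 2) k).2 (l + 1)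
    have h3 := (gaussBinom_absorption (q ^ 2) k).1 (l + 1)
    simp only [Nat.add_sub_cancel, gaussBinom] at h1 h2 h3 ⊢
    linear_combination F * q ^ (2 * k + 2) * (1 - q ^ (2 * l + 3)) * q ^ (l * (l + 1)) *
      (q ^ (2 * l + 2) * h3 + h1) - F * (1 - q ^ (2 * k + 2)) * q ^ (l * (l + 1)) * h2

end TransferOperator

section MomentSide

variable {K : Type*} [Field K]

/-- The inner alternating sum of the formula. -/
def altSum (q : K) (m : ℕ) : K :=
  ∑ i ∈ Finset.range (2 * m + 2), (-1) ^ (i + m) * q ^ (i * (2 * m + 2 - i))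

lemma altSum_succ (q : K) (m : ℕ) :
    altSum q (m + 1) = q ^ (2 * m + 3) * altSum q m + (-1) ^ (m + 1) * (1 - q ^ (2 * m + 3)) := by
  rw [altSum, show 2 * (m + 1) + 2 = 2 * m + 2 + 1 + 1 by ring, Finset.sum_range_succ,
    Finset.sum_range_succ', altSum, Finset.mul_sum]
  have h : ∀ i ∈ Finset.range (2 * m + 2),
      (-1 : K) ^ (i + 1 + (m + 1)) * q ^ ((i + 1) * (2 * m + 2 + 1 + 1 - (i + 1))) =
        q ^ (2 * m + 3) * ((-1) ^ (i + m) * q ^ (i * (2 * m + 2 - i))) := by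
    intro i hi
    obtain ⟨j, hj⟩ := Nat.exists_eq_add_of_le (Finset.mem_range.1 hi).le
    rw [show 2 * m + 2 + 1 + 1 - (i + 1) = j + 1 by lia, show 2 * m + 2 - i = j by lia,
      show (i + 1) * (j + 1) = (2 * m + 3) + i * j by rw [show 2 * m + 3 = i + j + 1 by lia]; ring]
    ring
  have hs : (-1 : K) ^ (2 * m + 2 + 1 + (m + 1)) = (-1) ^ m := by
    rw [show 2 * m + 2 + 1 + (m + 1) = 2 * (m + 2) + m by ring, pow_add, pow_mul]
    simp
  rw [Finset.sum_congr rfl h, show 2 * m + 2 + 1 + 1 - (2 * m + 2 + 1) = 1 by lia, hs]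
  ring

/-- Extension of `altSum` to all integers, antisymmetric about `-1`. -/
def altSumInt (q : K) : ℤ → K
  | Int.ofNat m => altSum q m
  | Int.negSucc 0 => 0
  | Int.negSucc (m + 1) => -altSum q m

lemma altSumInt_reflect (q : K) (c : ℤ) : altSumInt q (-2 - c) = -altSumInt q c := by
  rcases c with m | _ | m
  · rw [show -2 - Int.ofNat m = Int.negSucc (m + 1) by simp; lia]
    rfl
  · exact neg_zero.symm
  · rw [show -2 - Int.negSucc (m + 1) = Int.ofNat m by simp; lia]
    simp [altSumInt]

lemma altSum_zero (q : K) : altSum q 0 = 1 - q := by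
  simp [altSum, Finset.sum_range_succ, sub_eq_add_neg]

lemma altSumInt_rec {q : K} (hq : q ≠ 0) (c : ℤ) :
    altSumInt q c = q ^ (2 * c + 1) * altSumInt q (c - 1) + (-1) ^ c * (1 - q ^ (2 * c + 1)) := by
  have main (m : ℕ) : altSumInt q m =
      q ^ (2 * (m : ℤ) + 1) * altSumInt q (m - 1) +
        (-1) ^ (m : ℤ) * (1 - q ^ (2 * (m : ℤ) + 1)) := by
    rcases m with _ | m
    · change altSum q 0 = _ * altSumInt q (Int.negSucc 0) + _
      simp [altSum_zero, altSumInt]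
    · rw [show ((m + 1 : ℕ) : ℤ) - 1 = m by simp]
      change altSum q (m + 1) = _ * altSum q m + _
      rw [altSum_succ]
      norm_cast
  obtain ⟨m, rfl | rfl⟩ := c.eq_nat_or_neg
  · exact main m
  · rcases m with _ | m
    · exact main 0
    have h := main m
    rw [← neg_eq_iff_eq_neg.2 (altSumInt_reflect q m),
      ← neg_eq_iff_eq_neg.2 (altSumInt_reflect q (m - 1))] at h
    rw [show -2 - ((m : ℤ) - 1) = -((m + 1 : ℕ) : ℤ) by push_cast; ring,
      show -2 - (m : ℤ) = -((m + 1 : ℕ) : ℤ) - 1 by push_cast; ring] at h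
    have e : q ^ (2 * -((m + 1 : ℕ) : ℤ) + 1) = (q ^ (2 * (m : ℤ) + 1))⁻¹ := by
      rw [← zpow_neg]; congr 1
    have e' : (-1 : K) ^ (-((m + 1 : ℕ) : ℤ)) = - (-1) ^ (m : ℤ) := by
      rw [zpow_neg, zpow_natCast, zpow_natCast, pow_succ]
      rcases neg_one_pow_eq_or K m with h | h <;> simp [h]
    have hne : q ^ (2 * (m : ℤ) + 1) ≠ 0 := zpow_ne_zero _ hq
    rw [e, e']
    field_simp
    linear_combination h

/-- The family of sequences `∏_{i=1}^k (1 + q^{2i} T)(1 + q^{2i} T⁻¹) (1 + T⁻¹) s`, where `T` is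
the shift and `s` is `altSumInt q`. -/
def momentSeq (q : K) : ℕ → ℤ → K
  | 0, c => altSumInt q c + altSumInt q (c - 1)
  | k + 1, c => (1 + q ^ (4 * k + 4)) * momentSeq q k c +
      q ^ (2 * k + 2) * (momentSeq q k (c + 1) + momentSeq q k (c - 1))

lemma momentSeq_reflect (q : K) (k : ℕ) (c : ℤ) :
    momentSeq q k (-1 - c) = -momentSeq q k c := by
  induction k generalizing c with
  | zero =>
    have h1 := altSumInt_reflect q c
    have h2 := altSumInt_reflect q (c - 1)
    simp only [momentSeq]
    rw [show -1 - c - 1 = -2 - c by ring, show -1 - c = -2 - (c - 1) by ring, h1, h2]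
    ring
  | succ k ih =>
    simp only [momentSeq]
    rw [show -1 - c + 1 = -1 - (c - 1) by ring, show -1 - c - 1 = -1 - (c + 1) by ring, ih, ih, ih]
    ring

lemma momentSeq_qShift {q : K} (hq : q ≠ 0) (k : ℕ) (c : ℤ) :
    momentSeq q k c + q ^ (2 * k + 2) * momentSeq q k (c - 1) =
      q ^ (2 * c - 1) * (momentSeq q k (c - 2) + q ^ (2 * k + 2) * momentSeq q k (c - 1)) := by
  induction k generalizing c with
  | zero =>
    have h0 := altSumInt_rec hq c
    have h1 := altSumInt_rec hq (c - 1)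
    have h2 := altSumInt_rec hq (c - 2)
    have s1 : (-1 : K) ^ (c - 1) = - (-1) ^ c := by
      rw [zpow_sub_one₀ (by simp)]; simp
    have s2 : (-1 : K) ^ (c - 2) = (-1) ^ c := by simp [zpow_sub₀]
    have p0 : q ^ (2 * c + 1) = q ^ (2 * c - 1) * q ^ 2 := by
      rw [← zpow_natCast, ← zpow_add₀ hq]; congr 1; push_cast; ring
    have p2 : q ^ 2 * q ^ (2 * (c - 2) + 1) = q ^ (2 * c - 1) := by
      rw [← zpow_natCast, ← zpow_add₀ hq]; congr 1; push_cast; ring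
    rw [s1, show 2 * (c - 1) + 1 = 2 * c - 1 by ring, show c - 1 - 1 = c - 2 by ring] at h1
    rw [s2, show c - 2 - 1 = c - 3 by ring] at h2
    rw [p0] at h0
    simp only [momentSeq, show c - 1 - 1 = c - 2 by ring, show c - 2 - 1 = c - 3 by ring]
    linear_combination h0 + (1 + q ^ 2) * h1 + q ^ 2 * h2 +
      (altSumInt q (c - 3) - (-1) ^ c) * p2
  | succ k ih =>
    have h0 := ih c
    have h1 := ih (c + 1)
    have h2 := ih (c - 1)
    have p1 : q ^ (2 * (c + 1) - 1) = q ^ (2 * c - 1) * q ^ 2 := by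
      rw [← zpow_natCast, ← zpow_add₀ hq]; congr 1; push_cast; ring
    have p2 : q ^ 2 * q ^ (2 * (c - 1) - 1) = q ^ (2 * c - 1) := by
      rw [← zpow_natCast, ← zpow_add₀ hq]; congr 1; push_cast; ring
    rw [p1] at h1
    simp only [momentSeq, show c - 1 - 1 = c - 2 by ring, show c - 2 - 1 = c - 3 by ring,
      show c - 1 - 2 = c - 3 by ring, show c + 1 - 1 = c by ring, show c + 1 - 2 = c - 1 by ring,
      show c - 1 + 1 = c by ring, show c - 2 + 1 = c - 1 by ring] at h0 h1 h2 ⊢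
    linear_combination (1 + q ^ (4 * k + 6)) * h0 + q ^ (2 * k + 2) * h1 +
      q ^ (2 * k + 4) * h2 +
      q ^ (2 * k + 2) * (momentSeq q k (c - 3) + q ^ (2 * k + 2) * momentSeq q k (c - 2)) * p2

lemma momentSeq_apply_zero {q : K} (hq : q ≠ 0) (k : ℕ) :
    momentSeq q k 0 = qFact q (2 * k + 1) := by
  induction k with
  | zero =>
    simp [momentSeq, qFact, ← altSum_zero]
    change altSum q 0 + altSumInt q (Int.negSucc 0) = _
    simp [altSumInt]
  | succ k ih =>
    have h := momentSeq_qShift hq k 1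
    have hr := momentSeq_reflect q k 0
    norm_num at h hr
    simp only [momentSeq, zero_add, zero_sub, hr]
    rw [show 2 * (k + 1) + 1 = 2 * k + 1 + 1 + 1 by ring, qFact_succ, qFact_succ, ← ih]
    rw [hr] at h
    linear_combination q ^ (2 * k + 2) * h

/-- The operator `T + 2 + T⁻¹` on sequences, where `T` is the shift. -/
def shiftOp (K : Type*) [Field K] : (ℤ → K) →ₗ[K] (ℤ → K) where
  toFun g c := g (c + 1) + 2 * g c + g (c - 1)
  map_add' f g := by ext c; simp only [Pi.add_apply]; ring
  map_smul' a g := by ext c; simp only [Pi.smul_apply, smul_eq_mul, RingHom.id_apply]; ring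

lemma shiftOp_momentSeq (q : K) (k : ℕ) :
    q ^ (2 * k + 2) • shiftOp K (momentSeq q k) =
      momentSeq q (k + 1) - (1 - q ^ (2 * k + 2)) ^ 2 • momentSeq q k := by
  ext c
  simp only [shiftOp, LinearMap.coe_mk, AddHom.coe_mk, Pi.smul_apply, Pi.sub_apply, smul_eq_mul,
    momentSeq]
  ring

lemma sum_choose_succ_shift (g : ℤ → K) (m : ℕ) (c : ℤ) :
    ∑ l ∈ Finset.range (m + 2), ((m + 1).choose l : K) * g (c - l) =
      ∑ l ∈ Finset.range (m + 1), (m.choose l : K) * g (c - l) +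
      ∑ l ∈ Finset.range (m + 1), (m.choose l : K) * g (c - 1 - l) := by
  have h : ∑ l ∈ Finset.range (m + 1), (m.choose l : K) * g (c - l) =
      ∑ l ∈ Finset.range (m + 1), (m.choose (l + 1) : K) * g (c - (l + 1 : ℕ)) + g c := by
    have := Finset.sum_range_succ (fun l => (m.choose l : K) * g (c - l)) (m + 1)
    rw [Nat.choose_succ_self, Nat.cast_zero, zero_mul, add_zero] at this
    rw [← this, Finset.sum_range_succ']
    simp
  rw [Finset.sum_range_succ', h, add_right_comm, ← Finset.sum_add_distrib]
  congr 1
  · refine Finset.sum_congr rfl fun l _ => ?_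
    rw [Nat.choose_succ_succ, show c - 1 - (l : ℤ) = c - (l + 1 : ℕ) by push_cast; ring]
    push_cast
    ring
  · simp

lemma shiftOp_pow_momentSeq_zero (q : K) (n : ℕ) (c : ℤ) :
    (shiftOp K ^ n) (momentSeq q 0) c =
      ∑ l ∈ Finset.range (2 * n + 2), ((2 * n + 1).choose l : K) * altSumInt q (c + n - l) := by
  induction n generalizing c with
  | zero => simp [Finset.sum_range_succ, momentSeq]
  | succ n ih =>
    rw [pow_succ', Module.End.mul_apply]
    change (shiftOp K ^ n) (momentSeq q 0) (c + 1) + 2 * (shiftOp K ^ n) (momentSeq q 0) c +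
      (shiftOp K ^ n) (momentSeq q 0) (c - 1) = _
    have h1 := sum_choose_succ_shift (altSumInt q) (2 * n + 2) (c + (n + 1 : ℕ))
    have h2 := sum_choose_succ_shift (altSumInt q) (2 * n + 1) (c + (n + 1 : ℕ))
    have h3 := sum_choose_succ_shift (altSumInt q) (2 * n + 1) (c + n)
    rw [show c + (n + 1 : ℕ) - 1 = c + n by push_cast; ring] at h1 h2
    rw [show c + (n : ℤ) - 1 = c - 1 + n by ring] at h3
    rw [ih, ih, ih, show c + 1 + n = c + (n + 1 : ℕ) by push_cast; ring]
    refine Eq.trans ?_ h1.symm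
    refine Eq.trans ?_ (congrArg₂ (· + ·) h2 h3).symm
    ring

lemma shiftOp_pow_momentSeq_zero_apply_zero (q : K) (n : ℕ) :
    (shiftOp K ^ n) (momentSeq q 0) 0 =
      ∑ k ∈ Finset.range (n + 1),
        ((chooseInt (2 * n + 1) ((n : ℤ) - k) - chooseInt (2 * n + 1) ((n : ℤ) - k - 1) : ℤ) : K) *
          altSum q k := by
  have hneg (j : ℕ) : altSumInt q (0 + n - (n + 1 + (j + 1) : ℕ)) = -altSum q j := by
    rw [show (0 + n - (n + 1 + (j + 1) : ℕ) : ℤ) = -2 - j by push_cast; ring, altSumInt_reflect]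
    rfl
  have hzero : altSumInt q (0 + n - (n + 1 + 0 : ℕ)) = 0 := by
    rw [show (0 + n - (n + 1 + 0 : ℕ) : ℤ) = Int.negSucc 0 by push_cast; ring]
    rfl
  rw [shiftOp_pow_momentSeq_zero, show 2 * n + 2 = n + 1 + (n + 1) by ring, Finset.sum_range_add,
    Finset.sum_range_succ' (fun j => ((2 * n + 1).choose (n + 1 + j) : K) * _) n, hzero, mul_zero,
    add_zero]
  simp only [hneg, Int.cast_sub, sub_mul, Finset.sum_sub_distrib, mul_neg, Finset.sum_neg_distrib,
    ← sub_eq_add_neg]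
  congr 1
  · rw [← Finset.sum_range_reflect]
    refine Finset.sum_congr rfl fun k hk => ?_
    obtain ⟨j, rfl⟩ := Nat.exists_eq_add_of_le (Nat.lt_succ_iff.1 (Finset.mem_range.1 hk))
    rw [show k + j + 1 - 1 - k = j by lia, show (0 + (k + j : ℕ) - (j : ℕ) : ℤ) = k by
      push_cast; ring, show ((k + j : ℕ) : ℤ) - k = j by push_cast; ring]
    simp [chooseInt, altSumInt]
  · rw [Finset.sum_range_succ, show chooseInt (2 * n + 1) ((n : ℤ) - n - 1) = 0 by simp [chooseInt]]
    rw [Int.cast_zero, zero_mul, add_zero]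
    refine Finset.sum_congr rfl fun k hk => ?_
    obtain ⟨j, rfl⟩ := Nat.exists_eq_add_of_lt (Finset.mem_range.1 hk)
    rw [show ((k + j + 1 : ℕ) : ℤ) - k - 1 = j by push_cast; ring,
      Nat.choose_symm_of_eq_add (show 2 * (k + j + 1) + 1 = k + j + 1 + 1 + (k + 1) + j by ring)]
    simp [chooseInt]

end MomentSide

lemma functional_pow_eq {K V W : Type*} [Field K] [AddCommGroup V] [Module K V] [AddCommGroup W]
    [Module K W] {f : V →ₗ[K] V} {g : W →ₗ[K] W} {φ : V →ₗ[K] K} {ψ : W →ₗ[K] K} {u : ℕ → V}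
    {w : ℕ → W} {a b : ℕ → K} (ha : ∀ k, a k ≠ 0)
    (hf : ∀ k, a k • f (u k) = u (k + 1) - b k • u k)
    (hg : ∀ k, a k • g (w k) = w (k + 1) - b k • w k) (h : ∀ k, φ (u k) = ψ (w k)) (n k : ℕ) :
    φ ((f ^ n) (u k)) = ψ ((g ^ n) (w k)) := by
  induction n generalizing k with
  | zero => exact h k
  | succ n ih =>
    have hφ : a k * φ ((f ^ (n + 1)) (u k)) = φ ((f ^ n) (a k • f (u k))) := by
      simp [pow_succ]
    have hψ : a k * ψ ((g ^ (n + 1)) (w k)) = ψ ((g ^ n) (a k • g (w k))) := by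
      simp [pow_succ]
    refine mul_left_cancel₀ (ha k) ?_
    rw [hφ, hψ, hf, hg]
    simp only [map_sub, map_smul, ih]

theorem stmt11 (n : ℕ) :
    (1 - X : Polynomial ℤ) ^ (2*n+1) * Etan n =
      ∑ k ∈ Finset.range (n+1),
        ((chooseInt (2*n+1) ((n : ℤ) - k) - chooseInt (2*n+1) ((n : ℤ) - k - 1) : ℤ) :
            Polynomial ℤ) *
          ∑ i ∈ Finset.range (2*k+2), (-1 : Polynomial ℤ)^(i+k) * X ^ (i * (2*k+2-i)) := by
  let ι : Polynomial ℤ →+* FractionRing (Polynomial ℤ) := algebraMap _ _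
  have hι : Function.Injective ι := IsFractionRing.injective _ _
  have hq : ι X ≠ 0 := (map_ne_zero_iff ι hι).2 X_ne_zero
  have hpath (m : ℕ) :
      (fun l : ℕ => ι ((1 - X) ^ (2 * m + 1) * pathSum (2 * m) ((2 * l : ℕ) : ℤ))) =
      (twoStep (ι X) ^ m) (pathVec (ι X) 0) := by
    induction m with
    | zero =>
      ext l
      rcases l with _ | l
      · simp [pathSum_zero, pathVec, qFact, gaussBinom]
      · rw [mul_zero, pathSum_zero, if_neg (by lia)]
        simp [pathVec, gaussBinom]
    | succ m ih =>
      rw [pow_succ' (twoStep (ι X)), Module.End.mul_apply, ← ih]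
      ext l
      rw [one_sub_X_pow_mul_pathSum]
      simp [twoStep]
  apply hι
  have h0 := congrFun (hpath n) 0
  rw [Etan_eq_pathSum]
  refine h0.trans ?_
  have h := functional_pow_eq (f := twoStep (ι X)) (g := shiftOp _) (φ := LinearMap.proj 0)
    (ψ := LinearMap.proj 0) (u := pathVec (ι X)) (w := momentSeq (ι X))
    (fun k => pow_ne_zero (2 * k + 2) hq) (twoStep_pathVec _) (shiftOp_momentSeq _)
    (fun k => by simp [pathVec, gaussBinom_zero_right, momentSeq_apply_zero hq]) n 0
  refine h.trans ((shiftOp_pow_momentSeq_zero_apply_zero _ n).trans ?_)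
  simp [altSum]
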